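/- Let Ω ⊆ ℝⁿ be open, let X, Y : Ω → ℝⁿ be C¹ vector fields, and let f : Ω → ℝ be continuous with DX(p)(Y(p)) − DY(p)(X(p)) = f(p) • X(p) for all p ∈ Ω (Y tracks X). Let I ⊆ ℝ be an open interval and γ : I → Ω an integral curve of Y, i.e. γ has derivative Y(γ(t)) at every t ∈ I. If X(γ(t₀)) = 0 for some t₀ ∈ I, then X(γ(t)) = 0 for every t ∈ I. In particular the zero set of X is invariant under the local flow of Y. -/

import Mathlib

open Set

/-!
Along an integral curve `γ` of `Y`, the chain rule and the relation `[Y, X] = f • X` give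
`(X ∘ γ)' = DX(Y) = DY(X) + f • X`, so `X ∘ γ` solves the linear equation
`u' = (DY(γ t) + f (γ t) • id) u`. A solution of this equation that vanishes at one time vanishes
identically.
-/

open VectorField
open scoped NNReal

section Tracking

variable {E : Type*} [NormedAddCommGroup E] [NormedSpace ℝ E]

/-- The vector field `Y` tracks the vector field `X` on `Ω`, in the sense of Hirsch: the Lie bracket
`[Y, X]` is a continuous multiple of `X` there. The multiplier is arbitrary outside `Ω`. -/
def TracksOn (Y X : E → E) (Ω : Set E) : Prop :=
  ∃ f : E → ℝ, ContinuousOn f Ω ∧ ∀ p ∈ Ω, lieBracket ℝ Y X p = f p • X p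

theorem eqOn_of_isIntegralCurveOn_of_lipschitzWith {v : ℝ → E → E} {γ₁ γ₂ : ℝ → E} {I : Set ℝ}
    {K : ℝ → ℝ≥0} {t₀ : ℝ} (hI : I.OrdConnected) (hK : ContinuousOn K I)
    (hv : ∀ t ∈ I, LipschitzWith (K t) (v t)) (hγ₁ : IsIntegralCurveOn γ₁ v I)
    (hγ₂ : IsIntegralCurveOn γ₂ v I) (ht₀ : t₀ ∈ I) (heq : γ₁ t₀ = γ₂ t₀) :
    EqOn γ₁ γ₂ I := by
  have uniform_lipschitz {a b : ℝ} (hab : Icc a b ⊆ I) :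
      ∃ L : ℝ≥0, ∀ t ∈ Icc a b, LipschitzOnWith L (v t) univ := by
    obtain ⟨L, hL⟩ := isCompact_Icc.bddAbove_image (hK.mono hab)
    exact ⟨L, fun t ht ↦ ((hv t (hab ht)).weaken (hL (mem_image_of_mem K ht))).lipschitzOnWith⟩
  intro t ht
  rcases le_total t₀ t with hle | hle
  · have hsub : Icc t₀ t ⊆ I := hI.out ht₀ ht
    obtain ⟨L, hL⟩ := uniform_lipschitz hsub
    have right_deriv {γ : ℝ → E} (hγ : IsIntegralCurveOn γ v I) :
        ∀ τ ∈ Ico t₀ t, HasDerivWithinAt γ (v τ (γ τ)) (Ici τ) τ := fun τ hτ ↦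
      (hγ.mono hsub τ (Ico_subset_Icc_self hτ)).mono_of_mem_nhdsWithin (Icc_mem_nhdsGE_of_mem hτ)
    exact ODE_solution_unique_of_mem_Icc_right (fun τ hτ ↦ hL τ (Ico_subset_Icc_self hτ))
      (hγ₁.mono hsub).continuousOn (right_deriv hγ₁) (fun _ _ ↦ mem_univ _)
      (hγ₂.mono hsub).continuousOn (right_deriv hγ₂) (fun _ _ ↦ mem_univ _)
      heq (right_mem_Icc.mpr hle)
  · have hsub : Icc t t₀ ⊆ I := hI.out ht ht₀
    obtain ⟨L, hL⟩ := uniform_lipschitz hsub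
    have left_deriv {γ : ℝ → E} (hγ : IsIntegralCurveOn γ v I) :
        ∀ τ ∈ Ioc t t₀, HasDerivWithinAt γ (v τ (γ τ)) (Iic τ) τ := fun τ hτ ↦
      (hγ.mono hsub τ (Ioc_subset_Icc_self hτ)).mono_of_mem_nhdsWithin (Icc_mem_nhdsLE_of_mem hτ)
    exact ODE_solution_unique_of_mem_Icc_left (fun τ hτ ↦ hL τ (Ioc_subset_Icc_self hτ))
      (hγ₁.mono hsub).continuousOn (left_deriv hγ₁) (fun _ _ ↦ mem_univ _)
      (hγ₂.mono hsub).continuousOn (left_deriv hγ₂) (fun _ _ ↦ mem_univ _)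
      heq (left_mem_Icc.mpr hle)

theorem eqOn_zero_of_isIntegralCurveOn_clm {A : ℝ → E →L[ℝ] E} {u : ℝ → E} {I : Set ℝ} {t₀ : ℝ}
    (hI : I.OrdConnected) (hA : ContinuousOn A I) (hu : IsIntegralCurveOn u (fun t ↦ A t) I)
    (ht₀ : t₀ ∈ I) (h₀ : u t₀ = 0) : EqOn u 0 I := by
  have zero_solution : IsIntegralCurveOn (0 : ℝ → E) (fun t ↦ A t) I := fun t _ ↦ by
    simpa only [Pi.zero_apply, map_zero] using hasDerivWithinAt_zero (𝕜 := ℝ) (F := E) t I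
  exact eqOn_of_isIntegralCurveOn_of_lipschitzWith hI hA.nnnorm (fun t _ ↦ (A t).lipschitz)
    hu zero_solution ht₀ h₀

theorem hasDerivWithinAt_comp_of_lieBracket_eq_smul {X Y : E → E} {γ : ℝ → E} {I : Set ℝ} {t c : ℝ}
    (hX : DifferentiableAt ℝ X (γ t)) (hγ : HasDerivWithinAt γ (Y (γ t)) I t)
    (hc : lieBracket ℝ Y X (γ t) = c • X (γ t)) :
    HasDerivWithinAt (X ∘ γ)
      ((fderiv ℝ Y (γ t) + c • ContinuousLinearMap.id ℝ E) (X (γ t))) I t := by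
  have deriv_eq : fderiv ℝ X (γ t) (Y (γ t)) = fderiv ℝ Y (γ t) (X (γ t)) + c • X (γ t) :=
    sub_eq_iff_eq_add'.mp hc
  simpa [deriv_eq] using hX.hasFDerivAt.comp_hasDerivWithinAt t hγ

theorem zeroSet_invariant_of_tracking_general {Ω : Set E} {X Y : E → E} {I : Set ℝ} {γ : ℝ → E}
    {t₀ : ℝ} (hΩ : IsOpen Ω) (hX : DifferentiableOn ℝ X Ω) (hY : ContDiffOn ℝ 1 Y Ω)
    (htrack : TracksOn Y X Ω) (hI : I.OrdConnected) (hγΩ : MapsTo γ I Ω)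
    (hγ : IsIntegralCurveOn γ (fun _ ↦ Y) I) (ht₀ : t₀ ∈ I) (h₀ : X (γ t₀) = 0) :
    ∀ t ∈ I, X (γ t) = 0 := by
  obtain ⟨f, hf, hbracket⟩ := htrack
  let A (t : ℝ) : E →L[ℝ] E := fderiv ℝ Y (γ t) + f (γ t) • ContinuousLinearMap.id ℝ E
  have hA : ContinuousOn A I :=
    ((hY.continuousOn_fderiv_of_isOpen hΩ le_rfl).comp hγ.continuousOn hγΩ).add
      ((hf.comp hγ.continuousOn hγΩ).smul continuousOn_const)
  have hXγ : IsIntegralCurveOn (X ∘ γ) (fun t ↦ A t) I := fun t ht ↦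
    hasDerivWithinAt_comp_of_lieBracket_eq_smul
      (hX.differentiableAt (hΩ.mem_nhds (hγΩ ht))) (hγ t ht) (hbracket _ (hγΩ ht))
  exact eqOn_zero_of_isIntegralCurveOn_clm hI hA hXγ ht₀ h₀

end Tracking

/-- **Hirsch, Proposition 2.3, first assertion (local form).**
If `Y` tracks `X`, then the zero set of `X` is invariant under the flow of `Y`:
an integral curve of `Y` that meets `Z(X)` stays in `Z(X)`. -/
theorem zeroSet_invariant_of_tracking
    (n : ℕ) (Ω : Set (EuclideanSpace ℝ (Fin n))) (hΩ : IsOpen Ω)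
    (X Y : EuclideanSpace ℝ (Fin n) → EuclideanSpace ℝ (Fin n))
    (hX : ContDiffOn ℝ 1 X Ω) (hY : ContDiffOn ℝ 1 Y Ω)
    (f : EuclideanSpace ℝ (Fin n) → ℝ) (hf : ContinuousOn f Ω)
    (htrack : ∀ p ∈ Ω, fderiv ℝ X p (Y p) - fderiv ℝ Y p (X p) = f p • X p)
    (I : Set ℝ) (hIopen : IsOpen I) (hIinterval : I.OrdConnected)
    (γ : ℝ → EuclideanSpace ℝ (Fin n)) (hγΩ : ∀ t ∈ I, γ t ∈ Ω)
    (hγ : ∀ t ∈ I, HasDerivAt γ (Y (γ t)) t)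
    (t₀ : ℝ) (ht₀ : t₀ ∈ I) (hX0 : X (γ t₀) = 0) :
    ∀ t ∈ I, X (γ t) = 0 :=
  zeroSet_invariant_of_tracking_general hΩ (hX.differentiableOn one_ne_zero) hY ⟨f, hf, htrack⟩
    hIinterval hγΩ (fun t ht ↦ (hγ t ht).hasDerivWithinAt) ht₀ hX0
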